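/- Let p, q > 1 and a ≥ 1. Then sinh_{p,q} is (a,a)-convex on (0,1): for all r, s ∈ (0,1), sinh_{p,q}(((r^a + s^a)/2)^{1/a}) ≤ ((sinh_{p,q}(r)^a + sinh_{p,q}(s)^a)/2)^{1/a}. -/

import Mathlib

open Real Set

/-- `arsinhPQ p q x = ∫₀ˣ (1 + tᵠ)^(-1/p) dt`, the generalized inverse hyperbolic sine. -/
noncomputable def arsinhPQ (p q x : ℝ) : ℝ := ∫ t in (0:ℝ)..x, (1 + t ^ q) ^ (-(1/p))

/-- `sinhPQ p q` is the inverse function of `arsinhPQ p q` (restricted to `[0,∞)`). -/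
noncomputable def sinhPQ (p q : ℝ) : ℝ → ℝ := Function.invFunOn (arsinhPQ p q) (Set.Ici 0)

/-! The function `arsinhPQ p q` vanishes at `0` and has a positive antitone derivative, so it is
strictly increasing and concave. A nonnegative increasing concave function `f` dominates between
`x` and `y` the secant `z ↦ b + c * z` through `(x, f x)` and `(y, f y)`, and `b`, `c` are
nonnegative; by Minkowski's inequality, evaluating the secant at the power mean of `x` and `y`
gives at least the power mean of `f x` and `f y`. This inequality reverses when `f` is inverted. -/

/-- The power mean `M_a(x, y)` of two nonnegative reals; the exponent `a = 0` gives
the junk value `1`, not the geometric mean. -/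
noncomputable def powerMean (a x y : ℝ) : ℝ := ((x ^ a + y ^ a) / 2) ^ (1 / a)

section PowerMean

variable {a x y x' y' : ℝ}

lemma powerMean_comm (a x y : ℝ) : powerMean a x y = powerMean a y x := by
  rw [powerMean, powerMean, add_comm]

lemma powerMean_nonneg (hx : 0 ≤ x) (hy : 0 ≤ y) : 0 ≤ powerMean a x y := by
  unfold powerMean
  positivity

lemma powerMean_self (ha : a ≠ 0) (hx : 0 ≤ x) : powerMean a x x = x := by
  rw [powerMean, add_self_div_two, one_div, rpow_rpow_inv hx ha]

lemma powerMean_mul_mul {c : ℝ} (ha : a ≠ 0) (hc : 0 ≤ c) (hx : 0 ≤ x) (hy : 0 ≤ y) :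
    powerMean a (c * x) (c * y) = c * powerMean a x y := by
  rw [powerMean, mul_rpow hc hx, mul_rpow hc hy, ← mul_add, mul_div_assoc,
    mul_rpow (by positivity) (by positivity), one_div, rpow_rpow_inv hc ha, powerMean, one_div]

lemma powerMean_le_powerMean (ha : 0 < a) (hx : 0 ≤ x) (hy : 0 ≤ y) (hxx' : x ≤ x')
    (hyy' : y ≤ y') : powerMean a x y ≤ powerMean a x' y' := by
  unfold powerMean
  gcongr

lemma powerMean_mem_Icc (ha : 0 < a) (hx : 0 ≤ x) (hxy : x ≤ y) :
    powerMean a x y ∈ Icc x y := by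
  have hy : 0 ≤ y := hx.trans hxy
  constructor
  · calc x = powerMean a x x := (powerMean_self ha.ne' hx).symm
      _ ≤ powerMean a x y := powerMean_le_powerMean ha hx hx le_rfl hxy
  · calc powerMean a x y ≤ powerMean a y y := powerMean_le_powerMean ha hx hy hxy le_rfl
      _ = y := powerMean_self ha.ne' hy

lemma powerMean_mem_uIcc (ha : 0 < a) (hx : 0 ≤ x) (hy : 0 ≤ y) :
    powerMean a x y ∈ uIcc x y := by
  rcases le_total x y with hxy | hyx
  · exact Icc_subset_uIcc (powerMean_mem_Icc ha hx hxy)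
  · rw [powerMean_comm]
    exact Icc_subset_uIcc' (powerMean_mem_Icc ha hy hyx)

lemma powerMean_add_add_le (ha : 1 ≤ a) (hx : 0 ≤ x) (hy : 0 ≤ y) (hx' : 0 ≤ x')
    (hy' : 0 ≤ y') : powerMean a (x + x') (y + y') ≤ powerMean a x y + powerMean a x' y' := by
  have minkowski : ((x + x') ^ a + (y + y') ^ a) ^ (1 / a) ≤
      (x ^ a + y ^ a) ^ (1 / a) + (x' ^ a + y' ^ a) ^ (1 / a) := by
    simpa only [Fin.sum_univ_two, Matrix.cons_val_zero, Matrix.cons_val_one] using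
      Lp_add_le_of_nonneg Finset.univ ha (f := ![x, y]) (g := ![x', y'])
        (by simp [Fin.forall_fin_two, hx, hy]) (by simp [Fin.forall_fin_two, hx', hy'])
  unfold powerMean
  rw [div_rpow (by positivity) two_pos.le, div_rpow (by positivity) two_pos.le,
    div_rpow (by positivity) two_pos.le, ← add_div]
  gcongr

lemma powerMean_const_add_mul_le {b c : ℝ} (ha : 1 ≤ a) (hb : 0 ≤ b) (hc : 0 ≤ c) (hx : 0 ≤ x)
    (hy : 0 ≤ y) : powerMean a (b + c * x) (b + c * y) ≤ b + c * powerMean a x y := by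
  have ha0 : a ≠ 0 := by positivity
  calc powerMean a (b + c * x) (b + c * y)
      ≤ powerMean a b b + powerMean a (c * x) (c * y) :=
        powerMean_add_add_le ha hb hb (mul_nonneg hc hx) (mul_nonneg hc hy)
    _ = b + c * powerMean a x y := by
        rw [powerMean_self ha0 hb, powerMean_mul_mul ha0 hc hx hy]

end PowerMean

section Concave

variable {f : ℝ → ℝ} {s : Set ℝ} {x y z : ℝ}

lemma map_le_secant_of_concaveOn (hf : ConcaveOn ℝ s f) (hz : z ∈ s) (hy : y ∈ s) (hzx : z ≤ x)
    (hxy : x < y) : f z ≤ f x + slope f x y * (z - x) := by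
  rcases hzx.eq_or_lt with rfl | hzx
  · simp
  · have hx : x ∈ s := hf.1.ordConnected.out hz hy ⟨hzx.le, hxy.le⟩
    have hslope : slope f x y ≤ slope f x z :=
      hf.slope_anti hx ⟨hz, hzx.ne⟩ ⟨hy, hxy.ne'⟩ (hzx.trans hxy).le
    rw [slope_def_field f x z, le_div_iff_of_neg (sub_neg.2 hzx)] at hslope
    linarith

lemma secant_le_map_of_concaveOn (hf : ConcaveOn ℝ s f) (hx : x ∈ s) (hy : y ∈ s)
    (hz : z ∈ Icc x y) : f x + slope f x y * (z - x) ≤ f z := by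
  rcases hz.1.eq_or_lt with rfl | hxz
  · simp
  · have hslope : slope f x y ≤ slope f x z :=
      hf.slope_anti hx ⟨hf.1.ordConnected.out hx hy hz, hxz.ne'⟩
        ⟨hy, (hxz.trans_le hz.2).ne'⟩ hz.2
    rw [slope_def_field f x z, le_div_iff₀ (sub_pos.2 hxz)] at hslope
    linarith

lemma powerMean_map_le_of_concaveOn_of_lt {a : ℝ} (ha : 1 ≤ a) (hf : ConcaveOn ℝ s f)
    (hmono : MonotoneOn f s) (h0 : 0 ∈ s) (hf0 : 0 ≤ f 0) (hx : x ∈ s) (hy : y ∈ s)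
    (hx0 : 0 ≤ x) (hxy : x < y) : powerMean a (f x) (f y) ≤ f (powerMean a x y) := by
  set c := slope f x y with hc
  have hc0 : 0 ≤ c := by
    rw [hc, slope_def_field]
    exact div_nonneg (sub_nonneg.2 (hmono hx hy hxy.le)) (sub_nonneg.2 hxy.le)
  have hb0 : 0 ≤ f x - c * x := by linarith [map_le_secant_of_concaveOn hf h0 hy hx0 hxy]
  have hfx : f x = f x - c * x + c * x := by ring
  have hfy : f y = f x - c * x + c * y := by
    have : (y - x) * c = f y - f x := sub_smul_slope f x y
    linarith
  calc powerMean a (f x) (f y)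
      = powerMean a (f x - c * x + c * x) (f x - c * x + c * y) := by rw [← hfx, ← hfy]
    _ ≤ f x - c * x + c * powerMean a x y :=
        powerMean_const_add_mul_le ha hb0 hc0 hx0 (hx0.trans hxy.le)
    _ = f x + c * (powerMean a x y - x) := by ring
    _ ≤ f (powerMean a x y) :=
        secant_le_map_of_concaveOn hf hx hy (powerMean_mem_Icc (by positivity) hx0 hxy.le)

lemma powerMean_map_le_of_concaveOn {a : ℝ} (ha : 1 ≤ a) (hf : ConcaveOn ℝ s f)
    (hmono : MonotoneOn f s) (h0 : 0 ∈ s) (hf0 : 0 ≤ f 0) (hx : x ∈ s) (hy : y ∈ s)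
    (hx0 : 0 ≤ x) (hy0 : 0 ≤ y) : powerMean a (f x) (f y) ≤ f (powerMean a x y) := by
  rcases lt_trichotomy x y with hxy | rfl | hyx
  · exact powerMean_map_le_of_concaveOn_of_lt ha hf hmono h0 hf0 hx hy hx0 hxy
  · have ha0 : a ≠ 0 := by positivity
    rw [powerMean_self ha0 hx0, powerMean_self ha0 (hf0.trans (hmono h0 hx hx0))]
  · rw [powerMean_comm a x, powerMean_comm a (f x)]
    exact powerMean_map_le_of_concaveOn_of_lt ha hf hmono h0 hf0 hy hx hy0 hyx

lemma invFunOn_powerMean_le_of_concaveOn {a r t : ℝ} (ha : 1 ≤ a) (hf : ConcaveOn ℝ (Ici 0) f)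
    (hmono : StrictMonoOn f (Ici 0)) (hcont : ContinuousOn f (Ici 0)) (hf0 : 0 ≤ f 0)
    (hr : r ∈ f '' Ici 0) (ht : t ∈ f '' Ici 0) :
    Function.invFunOn f (Ici 0) (powerMean a r t) ≤
      powerMean a (Function.invFunOn f (Ici 0) r) (Function.invFunOn f (Ici 0) t) := by
  have image_nonneg : ∀ u ∈ f '' Ici 0, 0 ≤ u := by
    rintro _ ⟨x, hx, rfl⟩
    exact hf0.trans (hmono.monotoneOn self_mem_Ici hx hx)
  have hmean : powerMean a r t ∈ f '' Ici 0 :=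
    (isPreconnected_Ici.image f hcont).ordConnected.uIcc_subset hr ht
      (powerMean_mem_uIcc (by positivity) (image_nonneg r hr) (image_nonneg t ht))
  have inv_mem {u : ℝ} (hu : u ∈ f '' Ici 0) : Function.invFunOn f (Ici 0) u ∈ Ici 0 :=
    Function.invFunOn_mem hu
  have map_inv {u : ℝ} (hu : u ∈ f '' Ici 0) : f (Function.invFunOn f (Ici 0) u) = u :=
    Function.invFunOn_eq hu
  rw [← hmono.le_iff_le (inv_mem hmean) (powerMean_nonneg (inv_mem hr) (inv_mem ht))]
  calc f (Function.invFunOn f (Ici 0) (powerMean a r t))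
      = powerMean a (f (Function.invFunOn f (Ici 0) r)) (f (Function.invFunOn f (Ici 0) t)) := by
        rw [map_inv hmean, map_inv hr, map_inv ht]
    _ ≤ f (powerMean a (Function.invFunOn f (Ici 0) r) (Function.invFunOn f (Ici 0) t)) :=
        powerMean_map_le_of_concaveOn ha hf hmono.monotoneOn self_mem_Ici hf0 (inv_mem hr)
          (inv_mem ht) (inv_mem hr) (inv_mem ht)

end Concave

section Primitive

open MeasureTheory

variable {g : ℝ → ℝ} {a x : ℝ}

lemma intervalIntegrable_of_continuousOn_Ici (hg : ContinuousOn g (Ici a)) (hx : a ≤ x) :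
    IntervalIntegrable g volume a x :=
  (hg.mono Icc_subset_Ici_self).intervalIntegrable_of_Icc hx

lemma continuousOn_integral_Ici (hg : ContinuousOn g (Ici a)) :
    ContinuousOn (fun x => ∫ t in a..x, g t) (Ici a) := by
  intro x hx
  have hx' : a ≤ x + 1 := (mem_Ici.1 hx).trans (lt_add_one x).le
  have h := intervalIntegral.continuousOn_primitive_interval'
    (intervalIntegrable_of_continuousOn_Ici hg hx') left_mem_uIcc
  rw [uIcc_of_le hx'] at h
  refine (h x ⟨hx, (lt_add_one x).le⟩).mono_of_mem_nhdsWithin ?_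
  rw [← Ici_inter_Iic]
  exact Filter.inter_mem self_mem_nhdsWithin
    (mem_nhdsWithin_of_mem_nhds (Iic_mem_nhds (lt_add_one x)))

lemma hasDerivAt_integral_of_continuousOn_Ici (hg : ContinuousOn g (Ici a)) (hx : a < x) :
    HasDerivAt (fun x => ∫ t in a..x, g t) (g x) x :=
  intervalIntegral.integral_hasDerivAt_right (intervalIntegrable_of_continuousOn_Ici hg hx.le)
    ((hg.mono Ioi_subset_Ici_self).stronglyMeasurableAtFilter isOpen_Ioi x hx)
    (hg.continuousAt (Ici_mem_nhds hx))

lemma strictMonoOn_integral_of_pos (hg : ContinuousOn g (Ici a)) (hpos : ∀ x ∈ Ioi a, 0 < g x) :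
    StrictMonoOn (fun x => ∫ t in a..x, g t) (Ici a) := by
  refine strictMonoOn_of_deriv_pos (convex_Ici a) (continuousOn_integral_Ici hg) fun x hx => ?_
  rw [interior_Ici] at hx
  rw [(hasDerivAt_integral_of_continuousOn_Ici hg hx).deriv]
  exact hpos x hx

lemma concaveOn_integral_of_antitoneOn (hg : ContinuousOn g (Ici a))
    (hanti : AntitoneOn g (Ici a)) : ConcaveOn ℝ (Ici a) (fun x => ∫ t in a..x, g t) := by
  have hderiv : ∀ x ∈ Ioi a, HasDerivAt (fun x => ∫ t in a..x, g t) (g x) x := fun x hx =>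
    hasDerivAt_integral_of_continuousOn_Ici hg hx
  refine AntitoneOn.concaveOn_of_deriv (convex_Ici a) (continuousOn_integral_Ici hg) ?_ ?_
  · rw [interior_Ici]
    exact fun x hx => (hderiv x hx).differentiableAt.differentiableWithinAt
  · rw [interior_Ici]
    exact (hanti.mono Ioi_subset_Ici_self).congr fun x hx => (hderiv x hx).deriv.symm

end Primitive

section ArsinhPQ

variable {p q x : ℝ}

lemma arsinhPQ_zero (p q : ℝ) : arsinhPQ p q 0 = 0 := intervalIntegral.integral_same

lemma one_add_rpow_pos (q : ℝ) (hx : 0 ≤ x) : 0 < 1 + x ^ q := by positivity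

lemma continuousOn_one_add_rpow_rpow (hq : 0 ≤ q) (e : ℝ) :
    ContinuousOn (fun t : ℝ => (1 + t ^ q) ^ e) (Ici 0) :=
  (continuous_const.add (continuous_rpow_const hq)).continuousOn.rpow_const
    fun _ ht => Or.inl (one_add_rpow_pos q ht).ne'

lemma antitoneOn_one_add_rpow_rpow {e : ℝ} (hq : 0 ≤ q) (he : e ≤ 0) :
    AntitoneOn (fun t : ℝ => (1 + t ^ q) ^ e) (Ici 0) := fun _ hs _ _ hst =>
  rpow_le_rpow_of_nonpos (one_add_rpow_pos q hs)
    (add_le_add_right (rpow_le_rpow hs hst hq) 1) he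

lemma continuousOn_arsinhPQ (p : ℝ) (hq : 0 ≤ q) : ContinuousOn (arsinhPQ p q) (Ici 0) :=
  continuousOn_integral_Ici (continuousOn_one_add_rpow_rpow hq _)

lemma strictMonoOn_arsinhPQ (p : ℝ) (hq : 0 ≤ q) : StrictMonoOn (arsinhPQ p q) (Ici 0) :=
  strictMonoOn_integral_of_pos (continuousOn_one_add_rpow_rpow hq _)
    fun _ ht => rpow_pos_of_pos (one_add_rpow_pos q (mem_Ioi.1 ht).le) _

lemma concaveOn_arsinhPQ (hp : 0 ≤ p) (hq : 0 ≤ q) : ConcaveOn ℝ (Ici 0) (arsinhPQ p q) :=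
  concaveOn_integral_of_antitoneOn (continuousOn_one_add_rpow_rpow hq _)
    (antitoneOn_one_add_rpow_rpow hq (neg_nonpos.2 (one_div_nonneg.2 hp)))

lemma arsinhPQ_le_arsinhPQ_left {p' : ℝ} (hp : 0 < p) (hpp' : p ≤ p') (hq : 0 ≤ q)
    (hx : 0 ≤ x) : arsinhPQ p q x ≤ arsinhPQ p' q x :=
  intervalIntegral.integral_mono_on hx
    (intervalIntegrable_of_continuousOn_Ici (continuousOn_one_add_rpow_rpow hq _) hx)
    (intervalIntegrable_of_continuousOn_Ici (continuousOn_one_add_rpow_rpow hq _) hx)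
    fun _ ht => rpow_le_rpow_of_exponent_le (le_add_of_nonneg_right (rpow_nonneg ht.1 q))
      (neg_le_neg (one_div_le_one_div_of_le hp hpp'))

lemma hasDerivAt_mul_one_add_rpow_rpow (hq : q ≠ 0) (hx : 0 < x) :
    HasDerivAt (fun t : ℝ => t * (1 + t ^ q) ^ (-(1 / q))) ((1 + x ^ q) ^ (-(1 / q) - 1)) x := by
  have hpos : 0 < 1 + x ^ q := one_add_rpow_pos q hx.le
  have hpow : HasDerivAt (fun t : ℝ => 1 + t ^ q) (q * x ^ (q - 1)) x :=
    (hasDerivAt_rpow_const (Or.inl hx.ne')).const_add 1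
  refine ((hasDerivAt_id x).mul (hpow.rpow_const (p := -(1 / q)) (Or.inl hpos.ne'))).congr_deriv ?_
  have hsplit : (1 + x ^ q) ^ (-(1 / q)) = (1 + x ^ q) ^ (-(1 / q) - 1) * (1 + x ^ q) := by
    rw [← rpow_add_one hpos.ne', sub_add_cancel]
  rw [hsplit, rpow_sub_one hx.ne', id_eq]
  field_simp
  ring

/-- The range of `arsinhPQ p q` grows with `p`; at this exponent the integral is elementary and the
range is exactly `[0, 1)`. -/
lemma arsinhPQ_div_add_one (hq : 0 < q) (hx : 0 ≤ x) :
    arsinhPQ (q / (q + 1)) q x = x * (1 + x ^ q) ^ (-(1 / q)) := by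
  have hexp : -(1 / (q / (q + 1))) = -(1 / q) - 1 := by
    field_simp
    ring
  rw [arsinhPQ, hexp, intervalIntegral.integral_eq_sub_of_hasDerivAt_of_le hx
    (continuousOn_id.mul ((continuousOn_one_add_rpow_rpow hq.le _).mono Icc_subset_Ici_self))
    (fun t ht => hasDerivAt_mul_one_add_rpow_rpow hq.ne' ht.1)
    (intervalIntegrable_of_continuousOn_Ici (continuousOn_one_add_rpow_rpow hq.le _) hx)]
  simp

lemma exists_arsinhPQ_div_add_one_eq {r : ℝ} (hq : 0 < q) (hr : r ∈ Ico 0 1) :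
    ∃ x, 0 ≤ x ∧ arsinhPQ (q / (q + 1)) q x = r := by
  have hd : 0 < 1 - r ^ q := sub_pos.2 (rpow_lt_one hr.1 hr.2 hq)
  -- Solving `x * (1 + x ^ q) ^ (-(1 / q)) = r` for `x` gives `x ^ q = r ^ q / (1 - r ^ q)`.
  set x := r / (1 - r ^ q) ^ (1 / q) with hx
  have hx0 : 0 ≤ x := div_nonneg hr.1 (rpow_nonneg hd.le _)
  have hxq : 1 + x ^ q = (1 - r ^ q)⁻¹ := by
    rw [hx, div_rpow hr.1 (rpow_nonneg hd.le _), one_div, rpow_inv_rpow hd.le hq.ne']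
    field_simp
    ring
  refine ⟨x, hx0, ?_⟩
  rw [arsinhPQ_div_add_one hq hx0, hxq, inv_rpow hd.le, rpow_neg hd.le, inv_inv, hx,
    div_mul_cancel₀ _ (rpow_pos_of_pos hd _).ne']

lemma Ico_subset_image_arsinhPQ (hq : 0 < q) (hp : q / (q + 1) ≤ p) :
    Ico 0 1 ⊆ arsinhPQ p q '' Ici 0 := by
  intro r hr
  obtain ⟨x, hx, hxr⟩ := exists_arsinhPQ_div_add_one_eq hq hr
  have hle : r ≤ arsinhPQ p q x :=
    hxr.symm.trans_le (arsinhPQ_le_arsinhPQ_left (by positivity) hp hq.le hx)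
  exact (isPreconnected_Ici.image _ (continuousOn_arsinhPQ p hq.le)).ordConnected.out
    ⟨0, self_mem_Ici, arsinhPQ_zero p q⟩ ⟨x, hx, rfl⟩ ⟨hr.1, hle⟩

end ArsinhPQ

theorem sinhPQ_aa_convex_general {p q a r s : ℝ} (hp : 0 < p) (hq : 0 ≤ q) (ha : 1 ≤ a)
    (hr : r ∈ arsinhPQ p q '' Ici 0) (hs : s ∈ arsinhPQ p q '' Ici 0) :
    sinhPQ p q (powerMean a r s) ≤ powerMean a (sinhPQ p q r) (sinhPQ p q s) :=
  invFunOn_powerMean_le_of_concaveOn ha (concaveOn_arsinhPQ hp.le hq) (strictMonoOn_arsinhPQ p hq)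
    (continuousOn_arsinhPQ p hq) (arsinhPQ_zero p q).ge hr hs

theorem sinhPQ_aa_convex (p q a : ℝ) (hp : 1 < p) (hq : 1 < q) (ha : 1 ≤ a)
    (r s : ℝ) (hr : r ∈ Set.Ioo (0:ℝ) 1) (hs : s ∈ Set.Ioo (0:ℝ) 1) :
    sinhPQ p q (((r ^ a + s ^ a) / 2) ^ (1/a)) ≤
      ((sinhPQ p q r ^ a + sinhPQ p q s ^ a) / 2) ^ (1/a) := by
  have hq0 : 0 < q := zero_lt_one.trans hq
  have hpq : q / (q + 1) ≤ p := (div_le_one_of_le₀ (by linarith) (by linarith)).trans hp.le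
  have image : Ioo 0 1 ⊆ arsinhPQ p q '' Ici 0 :=
    Ioo_subset_Ico_self.trans (Ico_subset_image_arsinhPQ hq0 hpq)
  exact sinhPQ_aa_convex_general (zero_lt_one.trans hp) hq0.le ha (image hr) (image hs)
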